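/- (Implicit Function Theorem in a Denjoy-Carleman class) Let M = (M_0, M_1, M_2, …) be an increasing sequence of positive real numbers with M_0 = 1 that is logarithmically convex, satisfies lim_{j→∞} (M_j)^{1/j} = ∞, and satisfies sup_{j≥1} (M_{j+1}/M_j)^{1/j} < ∞. Let U be an open subset of ℝ^N × ℝ^P with product coordinates (x, y). Let f_1, …, f_P ∈ C^ℝ_M(U), let (a, b) ∈ U with f(a, b) = (f_1(a,b), …, f_P(a,b)) = 0, and suppose the matrix (∂f_i/∂y_j)(a, b) is invertible. Then there exists a product neighborhood V × W of (a, b) in U and a mapping g = (g_1, …, g_P) : V → W such that g_i ∈ C^ℝ_M(V) for all 1 ≤ i ≤ P, g(a) = b, and f(x, g(x)) = 0 for all x ∈ V. -/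

import Mathlib

/-- The `i`-th partial derivative of a function on Euclidean space. -/
noncomputable def pd {ι : Type} [Fintype ι] [DecidableEq ι] {W : Type} [NormedAddCommGroup W]
    [NormedSpace ℝ W] (i : ι) (f : EuclideanSpace ℝ ι → W) : EuclideanSpace ℝ ι → W :=
  fun x => fderiv ℝ f x (EuclideanSpace.single i 1)

/-- The multi-index derivative `D^α f`. -/
noncomputable def mderiv {ι : Type} [Fintype ι] [DecidableEq ι] {W : Type} [NormedAddCommGroup W]
    [NormedSpace ℝ W] (α : ι → ℕ) (f : EuclideanSpace ℝ ι → W) : EuclideanSpace ℝ ι → W :=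
  (Finset.univ : Finset ι).toList.foldr (fun i g => (pd i)^[α i] g) f

/-- Membership in the real Denjoy-Carleman class `C^ℝ_M(U)`: `f` is `C^∞` on `U` and on every
compact `K ⊆ U` there are `A, B > 0` with `|(1/α!) D^α f(x)| ≤ A B^{|α|} M_{|α|}`. -/
def CRM {ι : Type} [Fintype ι] [DecidableEq ι] (M : ℕ → ℝ)
    (U : Set (EuclideanSpace ℝ ι)) (f : EuclideanSpace ℝ ι → ℝ) : Prop :=
  ContDiffOn ℝ (⊤ : ℕ∞) f U ∧
  ∀ K : Set (EuclideanSpace ℝ ι), K ⊆ U → IsCompact K →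
    ∃ A B : ℝ, 0 < A ∧ 0 < B ∧ ∀ x ∈ K, ∀ α : ι → ℕ,
      (1 / (∏ i, ((α i).factorial : ℝ))) * |mderiv α f x| ≤
        A * B ^ (∑ i, α i) * M (∑ i, α i)

/-- The point of `ℝ^N × ℝ^P` (as `EuclideanSpace ℝ (Fin N ⊕ Fin P)`) with coordinates `(x, y)`. -/
noncomputable def pairE {N P : ℕ} (x : EuclideanSpace ℝ (Fin N)) (y : EuclideanSpace ℝ (Fin P)) :
    EuclideanSpace ℝ (Fin N ⊕ Fin P) :=
  (EuclideanSpace.equiv (Fin N ⊕ Fin P) ℝ).symm (Sum.elim (fun i => x i) (fun j => y j))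

/-- The first (`ℝ^N`) component of a point of `ℝ^N × ℝ^P`. -/
noncomputable def fstE {N P : ℕ} (z : EuclideanSpace ℝ (Fin N ⊕ Fin P)) :
    EuclideanSpace ℝ (Fin N) :=
  (EuclideanSpace.equiv (Fin N) ℝ).symm (fun i => z (Sum.inl i))

/-- The second (`ℝ^P`) component of a point of `ℝ^N × ℝ^P`. -/
noncomputable def sndE {N P : ℕ} (z : EuclideanSpace ℝ (Fin N ⊕ Fin P)) :
    EuclideanSpace ℝ (Fin P) :=
  (EuclideanSpace.equiv (Fin P) ℝ).symm (fun j => z (Sum.inr j))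

open Set in
/-- One-block ordered partition. -/
def oneBlock (n : ℕ) (hn : 0 < n) : OrderedFinpartition n where
  length := 1
  partSize _ := n
  partSize_pos _ := hn
  emb _ := id
  emb_strictMono _ := strictMono_id
  parts_strictMono := Subsingleton.strictMono _
  disjoint := by
    intro a _ b _ h
    exact absurd (Subsingleton.elim a b) h
  cover x := ⟨0, x, rfl⟩

lemma eq_oneBlock {n : ℕ} (hn : 0 < n) (c : OrderedFinpartition n) (hc : c.length = 1) :
    c = oneBlock n hn := by
  rcases c with ⟨len, ps, pp, emb, es, pm, dj, cov⟩
  dsimp at hc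
  subst hc
  have hsurj : ∀ m : Fin 1, Function.Surjective (emb m) := by
    intro m x
    obtain ⟨m', y, hy⟩ := cov x
    obtain rfl : m' = m := Subsingleton.elim _ _
    exact ⟨y, hy⟩
  have hps : ps = fun _ => n := by
    funext m
    have := Fintype.card_of_bijective ⟨(es m).injective, hsurj m⟩
    simpa using this
  subst hps
  have hemb : emb = fun _ => id := by
    funext m
    apply (StrictMono.range_inj (es m) strictMono_id).1
    rw [(hsurj m).range_eq]; simp
  subst hemb
  rfl

lemma taylorComp_split {E F G : Type*} [NormedAddCommGroup E] [NormedSpace ℝ E]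
    [NormedAddCommGroup F] [NormedSpace ℝ F] [NormedAddCommGroup G] [NormedSpace ℝ G]
    (q : FormalMultilinearSeries ℝ F G) (p : FormalMultilinearSeries ℝ E F) {n : ℕ} (hn : 0 < n)
    (v : Fin n → E) :
    q.taylorComp p n v = q 1 (fun _ => p n v) +
      ∑ c : OrderedFinpartition n with 2 ≤ c.length,
        q.compAlongOrderedFinpartition p c v := by
  classical
  rw [FormalMultilinearSeries.taylorComp, sum_apply]
  have h1 : (Finset.univ.filter fun c : OrderedFinpartition n => ¬ 2 ≤ c.length)
      = {oneBlock n hn} := by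
    ext c
    simp only [Finset.mem_filter, Finset.mem_univ, true_and, Finset.mem_singleton]
    constructor
    · intro h
      have := c.length_pos hn
      exact eq_oneBlock hn c (by omega)
    · rintro rfl
      simp [oneBlock]
  rw [← Finset.sum_filter_add_sum_filter_not _ (fun c : OrderedFinpartition n => 2 ≤ c.length),
    add_comm, h1, Finset.sum_singleton]
  rfl

/-- The weight inequality. -/
lemma weight_aux (M : ℕ → ℝ) (hpos : ∀ j, 0 < M j)
    (hlog : ∀ j : ℕ, M (j+1) / M j ≤ M (j+2) / M (j+1)) (n j : ℕ) :
    M (n+1) * M (j+1) ≤ M 1 * M (n+(j+1)) := by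
  have hm : Monotone (fun j => M (j+1) / M j) := monotone_nat_of_le_succ hlog
  induction j with
  | zero => rw [mul_comm]
  | succ j ih =>
    have h : M (j+2) / M (j+1) ≤ M (n+(j+1)+1) / M (n+(j+1)) := hm (by omega : j+1 ≤ n+(j+1))
    rw [div_le_div_iff₀ (hpos _) (hpos _)] at h
    have e : n + (j+1+1) = n+(j+1)+1 := by ring
    rw [e]
    have p1 := hpos (j+1); have p2 := hpos (n+(j+1)); have p3 := hpos (n+1)
    have p4 := hpos (j+2); have p5 := hpos 1
    have p6 := hpos (n+(j+1)+1)
    have : (M (n+1) * M (j+1+1)) * (M (j+1) * M (n+(j+1))) ≤ (M 1 * M (n+(j+1)+1)) * (M (j+1) * M (n+(j+1))) := by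
      calc _ = (M (n+1) * M (j+1)) * (M (j+2) * M (n+(j+1))) := by ring
        _ ≤ (M 1 * M (n+(j+1))) * (M (n+(j+1)+1) * M (j+1)) := by gcongr
        _ = _ := by ring
    exact le_of_mul_le_mul_right this (by positivity)

lemma weight (M : ℕ → ℝ) (hpos : ∀ j, 0 < M j) (hM0 : M 0 = 1)
    (hlog : ∀ j : ℕ, M (j+1) / M j ≤ M (j+2) / M (j+1)) (k : ℕ) (s : Fin k → ℕ)
    (hs : ∀ i, 0 < s i) :
    M k * ∏ i, M (s i) ≤ M 1 ^ k * M (∑ i, s i) := by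
  have hm : Monotone (fun j => M (j+1) / M j) := monotone_nat_of_le_succ hlog
  induction k with
  | zero => simp [hM0]
  | succ k ih =>
    rw [Fin.prod_univ_castSucc, Fin.sum_univ_castSucc]
    have ih' := ih (fun i => s i.castSucc) (fun i => hs _)
    set n := ∑ i : Fin k, s i.castSucc with hn
    have hkn : k ≤ n := by
      have : ∑ i : Fin k, 1 ≤ n := Finset.sum_le_sum (fun i _ => hs _)
      simpa using this
    have h : M (k+1) / M k ≤ M (n+1) / M n := hm hkn
    obtain ⟨j, hj⟩ : ∃ j, s (Fin.last k) = j + 1 := ⟨s (Fin.last k) - 1, by have := hs (Fin.last k); omega⟩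
    rw [hj]
    have h2 := weight_aux M hpos hlog n j
    have p1 := hpos k; have p2 := hpos (k+1); have p3 := hpos n; have p4 := hpos (n+1)
    have p5 := hpos (j+1); have p6 := hpos 1
    calc M (k+1) * ((∏ i : Fin k, M (s i.castSucc)) * M (j+1))
        = (M (k+1) / M k) * (M k * ∏ i : Fin k, M (s i.castSucc)) * M (j+1) := by
          field_simp
      _ ≤ (M (n+1) / M n) * (M 1 ^ k * M n) * M (j+1) := by
          have : 0 ≤ M k * ∏ i : Fin k, M (s i.castSucc) :=
            mul_nonneg p1.le (Finset.prod_nonneg fun i _ => (hpos _).le)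
          gcongr
      _ = M 1 ^ k * (M (n+1) * M (j+1)) := by field_simp
      _ ≤ M 1 ^ k * (M 1 * M (n + (j+1))) := by gcongr
      _ = _ := by ring

lemma sum_partSize {n : ℕ} (c : OrderedFinpartition n) : ∑ i, c.partSize i = n := by
  simpa using c.sum_sigma_eq_sum (fun _ => (1 : ℕ))

lemma partSize_lt {n : ℕ} (c : OrderedFinpartition n) (hc : 2 ≤ c.length) (i : Fin c.length) :
    c.partSize i < n := by
  have h := sum_partSize c
  have : ∃ j, j ≠ i := by
    have : Nontrivial (Fin c.length) := Fin.nontrivial_iff_two_le.2 hc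
    exact exists_ne i
  obtain ⟨j, hj⟩ := this
  have h2 : ∑ k ∈ ({i, j} : Finset _), c.partSize k ≤ ∑ k, c.partSize k :=
    Finset.sum_le_sum_of_subset (Finset.subset_univ _)
  rw [Finset.sum_pair hj.symm] at h2
  have := c.partSize_pos j
  omega

/-- Existence of the scalar majorant sequence. -/
lemma exists_majorant (c b : ℝ) (hb : 0 < b) :
    ∃ v : ℕ → ℝ, v 1 = 1 ∧
      (∀ n, 2 ≤ n → v n = ∑ p : OrderedFinpartition n with 2 ≤ p.length,
        c * (p.length.factorial * b ^ p.length) * ∏ i, v (p.partSize i)) ∧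
      ∃ A R : ℝ, 0 < A ∧ 0 < R ∧ ∀ n, v n ≤ A * R ^ n * n.factorial := by
  set H : ℝ → ℝ := fun s => ((1 + c * b) * s + c) - c * ((-b) * s + 1)⁻¹ with hH
  have hHan : ContDiffAt ℝ ⊤ H 0 := by
    rw [hH]
    apply ContDiffAt.sub (by fun_prop)
    apply ContDiffAt.mul (by fun_prop)
    apply ContDiffAt.inv (by fun_prop) (by simp)
  have hHk : ∀ k, 2 ≤ k → iteratedFDeriv ℝ k H 0 (fun _ => 1) = - (c * (k.factorial * b ^ k)) := by
    intro k hk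
    rw [← iteratedDeriv_eq_iteratedFDeriv, hH]
    have e1 : iteratedDeriv k (fun s : ℝ => (1 + c * b) * s + c) 0 = 0 := by
      obtain ⟨m, rfl⟩ : ∃ m, k = m + 2 := ⟨k - 2, by omega⟩
      rw [iteratedDeriv_eq_iterate, Function.iterate_add_apply]
      have : deriv^[2] (fun s : ℝ => (1 + c * b) * s + c) = fun _ => 0 := by
        simp only [Function.iterate_succ, Function.iterate_zero, Function.comp]
        have : deriv (fun s : ℝ => (1 + c * b) * s + c) = fun _ => (1 + c * b) := by
          funext s
          simp
        simp [this]
      rw [this, ← iteratedDeriv_eq_iterate]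
      simp
    have hinv : ContDiffAt ℝ k (fun s : ℝ => ((-b) * s + 1)⁻¹) 0 := by
      apply ContDiffAt.inv (by fun_prop) (by simp)
    rw [iteratedDeriv_fun_sub (by fun_prop) (contDiffAt_const.mul hinv), e1,
      iteratedDeriv_const_mul_field, iteratedDeriv_eq_iterate, iter_deriv_inv_linear]
    have : (-1 : ℝ) ^ k * (-b) ^ k = b ^ k := by rw [← mul_pow]; simp
    simp only [mul_zero, zero_add, one_zpow, mul_one, zero_sub]
    rw [← this]; ring
  have hHd : HasDerivAt H 1 0 := by
    have h1 : HasDerivAt (fun s : ℝ => (-b) * s + 1) (-b) 0 := by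
      simpa using ((hasDerivAt_id (0:ℝ)).const_mul (-b)).add_const 1
    have h2 := (h1.inv (by simp)).const_mul c
    have h3 : HasDerivAt (fun s : ℝ => (1 + c * b) * s + c) (1 + c * b) 0 := by
      simpa using ((hasDerivAt_id (0:ℝ)).const_mul (1 + c * b)).add_const c
    have := h3.sub h2
    refine HasDerivAt.congr_deriv (f := H) this ?_
    simp
  have hH0 : H 0 = 0 := by simp [hH]
  have hHf : HasFDerivAt H ((ContinuousLinearEquiv.refl ℝ ℝ : ℝ ≃L[ℝ] ℝ) : ℝ →L[ℝ] ℝ) 0 := by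
    have e : ((ContinuousLinearEquiv.refl ℝ ℝ : ℝ ≃L[ℝ] ℝ) : ℝ →L[ℝ] ℝ)
        = ContinuousLinearMap.toSpanSingleton ℝ 1 := by
      ext; simp
    rw [e]
    exact hHd.hasFDerivAt
  set V := hHan.localInverse hHf (by simp) with hV
  have hVc : ContDiffAt ℝ ⊤ V 0 := by
    have := hHan.to_localInverse hHf (by simp)
    rwa [hH0] at this
  have hV0 : V 0 = 0 := by
    have := hHan.localInverse_apply_image hHf (by simp)
    rwa [hH0] at this
  have hHV : ∀ᶠ t in nhds (0:ℝ), H (V t) = t := by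
    have := (hHan.hasStrictFDerivAt' hHf (by simp)).eventually_right_inverse
    rwa [hH0] at this
  have hcomp : ∀ n, 0 < n → iteratedFDeriv ℝ n (fun t : ℝ => t) 0 (fun _ => (1:ℝ)) =
      iteratedFDeriv ℝ n V 0 (fun _ => 1) +
      ∑ p : OrderedFinpartition n with 2 ≤ p.length,
        - (c * (p.length.factorial * b ^ p.length)) *
          ∏ i, iteratedFDeriv ℝ (p.partSize i) V 0 (fun _ => 1) := by
    intro n hn
    have e : (H ∘ V) =ᶠ[nhds 0] (fun t : ℝ => t) := hHV
    have hHan' : ContDiffAt ℝ ⊤ H (V 0) := by rwa [hV0]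
    rw [← (Filter.EventuallyEq.iteratedFDeriv ℝ e n).eq_of_nhds, iteratedFDeriv_comp (n := ⊤) hHan' hVc le_top,
      taylorComp_split _ _ hn]
    congr 1
    · rw [hV0]
      change iteratedFDeriv ℝ 1 H 0 _ = _
      rw [iteratedFDeriv_one_apply, hHf.fderiv]
      rfl
    · apply Finset.sum_congr rfl
      intro p hp
      simp only [Finset.mem_filter, Finset.mem_univ, true_and] at hp
      rw [FormalMultilinearSeries.compAlongOrderedFinpartition_apply, hV0]
      change iteratedFDeriv ℝ p.length H 0 (fun m => iteratedFDeriv ℝ (p.partSize m) V 0 (fun _ => 1)) = _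
      have := (iteratedFDeriv ℝ p.length H 0).map_smul_univ
        (fun m => iteratedFDeriv ℝ (p.partSize m) V 0 (fun _ => 1)) (fun _ => 1)
      simp only [smul_eq_mul, mul_one] at this
      rw [this, hHk _ hp]; ring
  refine ⟨fun n => iteratedFDeriv ℝ n V 0 (fun _ => 1), ?_, ?_, ?_⟩
  · have := hcomp 1 one_pos
    rw [Finset.filter_false_of_mem (by intro p _; have := p.length_le; omega)] at this
    simp only [Finset.sum_empty, add_zero] at this
    refine this.symm.trans ?_
    rw [iteratedFDeriv_one_apply]
    simp
  · intro n hn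
    have := hcomp n (by omega)
    have h0 : iteratedFDeriv ℝ n (fun t : ℝ => t) 0 (fun _ => (1:ℝ)) = 0 := by
      rw [← iteratedDeriv_eq_iteratedFDeriv]
      obtain ⟨m, rfl⟩ : ∃ m, n = m + 2 := ⟨n - 2, by omega⟩
      rw [iteratedDeriv_eq_iterate, Function.iterate_add_apply]
      have : deriv^[2] (fun s : ℝ => s) = fun _ => 0 := by
        simp only [Function.iterate_succ, Function.iterate_zero, Function.comp]
        simp
      rw [this, ← iteratedDeriv_eq_iterate]
      simp
    rw [h0] at this
    simp only [neg_mul, Finset.sum_neg_distrib] at this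
    simp only
    linarith
  · have han : AnalyticAt ℝ V 0 := hVc.analyticAt
    obtain ⟨p, r, hp⟩ := han
    obtain ⟨r', hrpos1, hr'⟩ := ENNReal.lt_iff_exists_nnreal_btwn.1 hp.r_pos
    have hrpos2 : 0 < r' := by exact_mod_cast hrpos1
    obtain ⟨C, hC, hCp⟩ := p.norm_le_div_pow_of_pos_of_lt_radius hrpos2 (hr'.trans_le hp.r_le)
    refine ⟨C, (r' : ℝ)⁻¹, hC, by positivity, ?_⟩
    intro n
    simp only
    rw [← hp.factorial_smul, nsmul_eq_mul, mul_comm]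
    gcongr
    calc p n (fun _ => 1) ≤ ‖p n (fun _ => 1)‖ := le_abs_self _
      _ ≤ ‖p n‖ * ∏ i : Fin n, ‖(1:ℝ)‖ := (p n).le_opNorm _
      _ = ‖p n‖ := by simp
      _ ≤ C / r' ^ n := hCp n
      _ = _ := by rw [inv_pow]; rfl

/-- The core estimate. -/
lemma core_bound {E F G : Type*} [NormedAddCommGroup E] [NormedSpace ℝ E]
    [NormedAddCommGroup F] [NormedSpace ℝ F] [NormedAddCommGroup G] [NormedSpace ℝ G]
    (M : ℕ → ℝ) (hpos : ∀ j, 0 < M j) (hmono : Monotone M) (hM0 : M 0 = 1)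
    (hlog : ∀ j : ℕ, M (j+1) / M j ≤ M (j+2) / M (j+1))
    (A B Λ D : ℝ) (hA : 0 < A) (hB : 0 < B) (hΛ : 0 < Λ) (hD : 0 < D) :
    ∃ A' R : ℝ, 0 < A' ∧ 0 < R ∧ ∀ (Φ : F → G) (φ : E → F) (x : E) (L : G →L[ℝ] F),
      ContDiffAt ℝ (⊤ : ℕ∞) Φ (φ x) → ContDiffAt ℝ (⊤ : ℕ∞) φ x →
      (∀ n, 2 ≤ n → iteratedFDeriv ℝ n (Φ ∘ φ) x = 0) →
      (∀ w, L (fderiv ℝ Φ (φ x) w) = w) → ‖L‖ ≤ Λ → ‖fderiv ℝ φ x‖ ≤ D →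
      (∀ k, 2 ≤ k → ‖iteratedFDeriv ℝ k Φ (φ x)‖ ≤ A * B ^ k * M k * k.factorial) →
      ∀ n, 1 ≤ n → ‖iteratedFDeriv ℝ n φ x‖ ≤ A' * R ^ n * M n * n.factorial := by
  obtain ⟨v, hv1, hv, A', R, hA', hR, hvb⟩ := exists_majorant (Λ * A) (B * M 1)
    (mul_pos hB (hpos 1))
  refine ⟨A', D * R, hA', by positivity, ?_⟩
  intro Φ φ x L hΦ hφ hz hL hLn hD' hbd
  have key : ∀ n, 1 ≤ n → ‖iteratedFDeriv ℝ n φ x‖ ≤ M n * D ^ n * v n := by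
    intro n
    induction n using Nat.strong_induction_on with
    | _ n ih =>
    intro hn
    rcases Nat.lt_or_ge n 2 with h2 | h2
    · obtain rfl : n = 1 := by omega
      rw [norm_iteratedFDeriv_one, hv1]
      have : 1 ≤ M 1 := by rw [← hM0]; exact hmono zero_le_one
      calc _ ≤ D := hD'
        _ ≤ M 1 * D := le_mul_of_one_le_left hD.le this
        _ = _ := by ring
    have hid : ∀ w, iteratedFDeriv ℝ n φ x w = - L (∑ c : OrderedFinpartition n with 2 ≤ c.length,
        (ftaylorSeries ℝ Φ (φ x)).compAlongOrderedFinpartition (ftaylorSeries ℝ φ x) c w) := by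
      intro w
      have h := congrArg (fun T => T w) (hz n h2)
      rw [iteratedFDeriv_comp (n := (⊤ : ℕ∞)) hΦ hφ (by exact_mod_cast le_top),
        taylorComp_split _ _ (by omega)] at h
      have h3 : (ftaylorSeries ℝ Φ (φ x)) 1 (fun _ => ftaylorSeries ℝ φ x n w)
          = fderiv ℝ Φ (φ x) (iteratedFDeriv ℝ n φ x w) := by
        change iteratedFDeriv ℝ 1 Φ (φ x) _ = _
        rw [iteratedFDeriv_one_apply]; rfl
      rw [h3] at h
      have h4 := congrArg L h
      rw [map_add, hL] at h4
      simp only [zero_apply, map_zero] at h4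
      exact eq_neg_of_add_eq_zero_left h4
    have hnorm : ‖iteratedFDeriv ℝ n φ x‖ ≤ Λ * ∑ c : OrderedFinpartition n with 2 ≤ c.length,
        ‖(ftaylorSeries ℝ Φ (φ x)).compAlongOrderedFinpartition (ftaylorSeries ℝ φ x) c‖ := by
      apply ContinuousMultilinearMap.opNorm_le_bound
      · exact mul_nonneg hΛ.le (Finset.sum_nonneg fun _ _ => norm_nonneg _)
      intro w
      rw [hid, norm_neg, mul_assoc, Finset.sum_mul]
      refine (L.le_opNorm _).trans ?_
      gcongr
      refine (norm_sum_le _ _).trans ?_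
      apply Finset.sum_le_sum
      intro c _
      exact ContinuousMultilinearMap.le_opNorm _ _
    refine hnorm.trans ?_
    rw [hv n h2, Finset.mul_sum, Finset.mul_sum]
    apply Finset.sum_le_sum
    intro c hc
    simp only [Finset.mem_filter, Finset.mem_univ, true_and] at hc
    have hb : ∀ i, ‖iteratedFDeriv ℝ (c.partSize i) φ x‖
        ≤ M (c.partSize i) * D ^ (c.partSize i) * v (c.partSize i) := fun i =>
      ih _ (partSize_lt c hc i) (c.partSize_pos i)
    have hvn : ∀ i, 0 ≤ v (c.partSize i) := by
      intro i
      have h := (norm_nonneg _).trans (hb i)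
      have := hpos (c.partSize i)
      exact nonneg_of_mul_nonneg_right h (by positivity)
    have hw := weight M hpos hM0 hlog c.length c.partSize c.partSize_pos
    rw [sum_partSize] at hw
    have hDp : ∏ i, D ^ (c.partSize i) = D ^ n := by
      rw [Finset.prod_pow_eq_pow_sum, sum_partSize]
    have hvp : 0 ≤ ∏ i, v (c.partSize i) := Finset.prod_nonneg fun i _ => hvn i
    calc Λ * ‖(ftaylorSeries ℝ Φ (φ x)).compAlongOrderedFinpartition (ftaylorSeries ℝ φ x) c‖
        ≤ Λ * (‖iteratedFDeriv ℝ c.length Φ (φ x)‖ *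
            ∏ i, ‖iteratedFDeriv ℝ (c.partSize i) φ x‖) := by
          gcongr
          exact c.norm_compAlongOrderedFinpartition_le _ _
      _ ≤ Λ * ((A * B ^ c.length * M c.length * c.length.factorial) *
            ∏ i, (M (c.partSize i) * D ^ (c.partSize i) * v (c.partSize i))) := by
          have := hpos c.length
          gcongr with i
          · exact hbd _ hc
          · exact hb i
      _ = (Λ * A * (c.length.factorial * B ^ c.length)) * D ^ n * (∏ i, v (c.partSize i)) *
            (M c.length * ∏ i, M (c.partSize i)) := by
          rw [Finset.prod_mul_distrib, Finset.prod_mul_distrib, hDp]; ring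
      _ ≤ (Λ * A * (c.length.factorial * B ^ c.length)) * D ^ n * (∏ i, v (c.partSize i)) *
            (M 1 ^ c.length * M n) := by
          gcongr
      _ = _ := by rw [mul_pow]; ring
  intro n hn
  have := hpos n
  calc _ ≤ M n * D ^ n * v n := key n hn
    _ ≤ M n * D ^ n * (A' * R ^ n * n.factorial) := by gcongr; exact hvb n
    _ = _ := by rw [mul_pow]; ring

section conv
variable {ι : Type} [Fintype ι] [DecidableEq ι]

lemma foldr_pd_ofFn {U : Set (EuclideanSpace ℝ ι)} (hU : IsOpen U)
    {f : EuclideanSpace ℝ ι → ℝ} (hf : ContDiffOn ℝ (⊤ : ℕ∞) f U) (n : ℕ) (s : Fin n → ι) :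
    ∀ x ∈ U, (List.ofFn s).foldr pd f x =
      iteratedFDeriv ℝ n f x (fun k => EuclideanSpace.single (s k) 1) := by
  induction n with
  | zero => intro x _; simp
  | succ n ih =>
    intro x hx
    rw [List.ofFn_succ, List.foldr_cons, pd]
    have e : (List.ofFn fun i : Fin n => s i.succ).foldr pd f =ᶠ[nhds x]
        fun y => iteratedFDeriv ℝ n f y (fun k => EuclideanSpace.single (s k.succ) 1) := by
      filter_upwards [hU.mem_nhds hx] with y hy using ih _ y hy
    rw [e.fderiv_eq, iteratedFDeriv_succ_apply_left]
    have hd : DifferentiableAt ℝ (iteratedFDeriv ℝ n f) x :=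
      (hf.contDiffAt (hU.mem_nhds hx)).differentiableAt_iteratedFDeriv
        (by exact_mod_cast WithTop.coe_lt_top n)
    rw [fderiv_continuousMultilinear_apply_const_apply hd]
    rfl

lemma foldr_pd_contDiffOn {U : Set (EuclideanSpace ℝ ι)} (hU : IsOpen U)
    {f : EuclideanSpace ℝ ι → ℝ} (hf : ContDiffOn ℝ (⊤ : ℕ∞) f U) (l : List ι) :
    ContDiffOn ℝ (⊤ : ℕ∞) (l.foldr pd f) U := by
  induction l with
  | nil => exact hf
  | cons i l ih =>
    exact (ih.fderiv_of_isOpen (m := (⊤ : ℕ∞)) hU (by simp)).clm_apply contDiffOn_const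

lemma foldr_pd_eqOn {U : Set (EuclideanSpace ℝ ι)} (hU : IsOpen U)
    {f : EuclideanSpace ℝ ι → ℝ} (hf : ContDiffOn ℝ (⊤ : ℕ∞) f U) {l l' : List ι}
    (h : l.Perm l') : Set.EqOn (l.foldr pd f) (l'.foldr pd f) U := by
  induction h with
  | nil => intro x _; rfl
  | trans _ _ h1 h2 => exact h1.trans h2
  | cons i _ ih =>
    intro x hx
    simp only [List.foldr_cons, pd]
    have e := ih.eventuallyEq_of_mem (hU.mem_nhds hx)
    rw [e.fderiv_eq]
  | swap i j l =>
    intro x hx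
    have hg := foldr_pd_contDiffOn hU hf l
    simp only [List.foldr_cons]
    generalize l.foldr pd f = g at hg ⊢
    have hgx : ContDiffAt ℝ (⊤ : ℕ∞) g x := hg.contDiffAt (hU.mem_nhds hx)
    have hd : DifferentiableAt ℝ (fderiv ℝ g) x :=
      ((hg.fderiv_of_isOpen (m := (⊤ : ℕ∞)) hU (by simp)).contDiffAt
        (hU.mem_nhds hx)).differentiableAt (by simp)
    have hs : IsSymmSndFDerivAt ℝ g x := hgx.isSymmSndFDerivAt
      (by rw [minSmoothness_of_isRCLikeNormedField]; exact WithTop.coe_le_coe.2 (le_top : (2 : ℕ∞) ≤ ⊤))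
    have h2 : ∀ a b : ι, pd a (pd b g) x =
        fderiv ℝ (fderiv ℝ g) x (EuclideanSpace.single a 1) (EuclideanSpace.single b 1) := by
      intro a b
      change fderiv ℝ (fun y => fderiv ℝ g y (EuclideanSpace.single b 1)) x _ = _
      rw [fderiv_clm_apply hd (differentiableAt_const _)]
      simp
    rw [h2, h2]
    exact hs _ _

lemma mderiv_eq_foldr (α : ι → ℕ) (f : EuclideanSpace ℝ ι → ℝ) :
    mderiv α f = ((Finset.univ : Finset ι).toList.flatMap
      (fun i => List.replicate (α i) i)).foldr pd f := by
  have hr : ∀ (i : ι) (n : ℕ) (g : EuclideanSpace ℝ ι → ℝ),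
      (pd i)^[n] g = (List.replicate n i).foldr pd g := by
    intro i n g
    induction n with
    | zero => rfl
    | succ n ih => rw [Function.iterate_succ_apply', ih]; rfl
  rw [mderiv]
  induction (Finset.univ : Finset ι).toList with
  | nil => rfl
  | cons i l ih => rw [List.foldr_cons, ih, List.flatMap_cons, List.foldr_append, hr]

lemma count_flat (α : ι → ℕ) (i : ι) : ((Finset.univ : Finset ι).toList.flatMap
      (fun i => List.replicate (α i) i)).count i = α i := by
  rw [List.count_flatMap]
  have : (List.count i ∘ fun i => List.replicate (α i) i) = fun j => if j = i then α i else 0 := by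
    funext j
    simp only [Function.comp, List.count_replicate]
    by_cases h : j = i <;> simp [h]
  rw [this, Finset.sum_map_toList]
  simp

set_option linter.unusedSectionVars false in
lemma length_flat (α : ι → ℕ) : ((Finset.univ : Finset ι).toList.flatMap
      (fun i => List.replicate (α i) i)).length = ∑ i, α i := by
  rw [List.length_flatMap]
  simp [Finset.sum_map_toList]

lemma mderiv_le {U : Set (EuclideanSpace ℝ ι)} (hU : IsOpen U)
    {f : EuclideanSpace ℝ ι → ℝ} (hf : ContDiffOn ℝ (⊤ : ℕ∞) f U) (α : ι → ℕ)
    {x : EuclideanSpace ℝ ι} (hx : x ∈ U) :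
    |mderiv α f x| ≤ ‖iteratedFDeriv ℝ (∑ i, α i) f x‖ := by
  rw [mderiv_eq_foldr]
  have hl := length_flat α
  generalize ((Finset.univ : Finset ι).toList.flatMap (fun i => List.replicate (α i) i)) = l at hl ⊢
  rw [← hl]
  have h := foldr_pd_ofFn hU hf l.length l.get x hx
  rw [List.ofFn_get] at h
  rw [h]
  refine ((iteratedFDeriv ℝ l.length f x).le_opNorm _).trans ?_
  simp

lemma norm_iteratedFDeriv_le_of_mderiv {U : Set (EuclideanSpace ℝ ι)} (hU : IsOpen U)
    {f : EuclideanSpace ℝ ι → ℝ} (hf : ContDiffOn ℝ (⊤ : ℕ∞) f U) (n : ℕ) (C : ℝ) (hC : 0 ≤ C)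
    {x : EuclideanSpace ℝ ι} (hx : x ∈ U)
    (h : ∀ α : ι → ℕ, ∑ i, α i = n → |mderiv α f x| ≤ C) :
    ‖iteratedFDeriv ℝ n f x‖ ≤ (Fintype.card ι : ℝ) ^ n * C := by
  have hs : ∀ s : Fin n → ι,
      |iteratedFDeriv ℝ n f x (fun k => EuclideanSpace.single (s k) 1)| ≤ C := by
    intro s
    rw [← foldr_pd_ofFn hU hf n s x hx]
    have hp : (List.ofFn s).Perm ((Finset.univ : Finset ι).toList.flatMap
      (fun i => List.replicate ((List.ofFn s).count i) i)) := by
      rw [List.perm_iff_count]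
      intro i
      rw [count_flat (fun i => (List.ofFn s).count i)]
    rw [foldr_pd_eqOn hU hf hp hx,
      ← congrFun (mderiv_eq_foldr (fun i => (List.ofFn s).count i) f) x]
    apply h
    rw [← length_flat, ← hp.length_eq, List.length_ofFn]
  apply ContinuousMultilinearMap.opNorm_le_bound (by positivity)
  intro v
  have hv : v = fun k => ∑ i, (v k i) • EuclideanSpace.single i (1:ℝ) := by
    funext k
    ext j
    simp [Finset.sum_apply, Pi.single_apply]
  have e : iteratedFDeriv ℝ n f x v = ∑ s : Fin n → ι, (∏ k, v k (s k)) *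
      iteratedFDeriv ℝ n f x (fun k => EuclideanSpace.single (s k) 1) := by
    conv_lhs => rw [hv]
    rw [ContinuousMultilinearMap.map_sum]
    apply Finset.sum_congr rfl
    intro s _
    rw [ContinuousMultilinearMap.map_smul_univ, smul_eq_mul]
  rw [e]
  refine (norm_sum_le _ _).trans ?_
  calc _ ≤ ∑ s : Fin n → ι, (∏ k, ‖v k‖) * C := by
        apply Finset.sum_le_sum
        intro s _
        rw [norm_mul, norm_prod]
        gcongr with k
        · exact PiLp.norm_apply_le (v k) (s k)
        · exact hs s
    _ = _ := by simp; ring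

lemma CRM.bound {M : ℕ → ℝ} (hpos : ∀ j, 0 < M j) {U : Set (EuclideanSpace ℝ ι)} (hU : IsOpen U)
    {f : EuclideanSpace ℝ ι → ℝ} (hf : CRM M U f) {K : Set (EuclideanSpace ℝ ι)} (hKU : K ⊆ U)
    (hK : IsCompact K) : ∃ A B : ℝ, 0 < A ∧ 0 < B ∧ ∀ x ∈ K, ∀ n,
      ‖iteratedFDeriv ℝ n f x‖ ≤ A * B ^ n * M n * n.factorial := by
  obtain ⟨A, B, hA, hB, h⟩ := hf.2 K hKU hK
  refine ⟨A, (Fintype.card ι + 1) * B, hA, by positivity, ?_⟩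
  intro x hx n
  have hMn := hpos n
  refine (norm_iteratedFDeriv_le_of_mderiv hU hf.1 n (A * B ^ n * M n * n.factorial)
    (by positivity) (hKU hx) ?_).trans ?_
  · rintro α rfl
    have h1 := h x hx α
    have hp : (0:ℝ) < ∏ i, ((α i).factorial : ℝ) :=
      Finset.prod_pos fun i _ => by exact_mod_cast (α i).factorial_pos
    rw [one_div, inv_mul_le_iff₀ hp] at h1
    refine h1.trans ?_
    rw [mul_comm]
    gcongr
    have := Nat.le_of_dvd (Nat.factorial_pos _)
      (Nat.prod_factorial_dvd_factorial_sum Finset.univ α)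
    exact_mod_cast this
  · rw [mul_pow]
    have : (Fintype.card ι : ℝ) ^ n ≤ (Fintype.card ι + 1 : ℝ) ^ n := by gcongr; linarith
    calc _ ≤ (Fintype.card ι + 1 : ℝ) ^ n * (A * B ^ n * M n * n.factorial) := by gcongr
      _ = _ := by ring

lemma factorial_le_multi (α : ι → ℕ) :
    ((∑ i, α i).factorial : ℝ) ≤ (Fintype.card ι : ℝ) ^ (∑ i, α i) *
      ∏ i, ((α i).factorial : ℝ) := by
  have h1 := Nat.multinomial_spec Finset.univ α
  have h2 : Nat.multinomial Finset.univ α ≤ Fintype.card ι ^ (∑ i, α i) := by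
    have := Finset.sum_pow_eq_sum_piAntidiag (Finset.univ : Finset ι) (fun _ => (1:ℕ)) (∑ i, α i)
    simp only [Finset.sum_const, Finset.card_univ, smul_eq_mul, mul_one, one_pow,
      Finset.prod_const_one] at this
    rw [this]
    exact Finset.single_le_sum (f := fun k => Nat.multinomial Finset.univ k)
      (fun _ _ => Nat.zero_le _) (by simp)
  rw [← h1, mul_comm]
  push_cast
  gcongr
  exact_mod_cast h2

lemma CRM_of_bound {M : ℕ → ℝ} (hpos : ∀ j, 0 < M j) {U : Set (EuclideanSpace ℝ ι)}
    (hU : IsOpen U)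
    {f : EuclideanSpace ℝ ι → ℝ} (hf : ContDiffOn ℝ (⊤ : ℕ∞) f U)
    (h : ∀ K ⊆ U, IsCompact K → ∃ A B : ℝ, 0 < A ∧ 0 < B ∧ ∀ x ∈ K, ∀ n,
      ‖iteratedFDeriv ℝ n f x‖ ≤ A * B ^ n * M n * n.factorial) : CRM M U f := by
  refine ⟨hf, ?_⟩
  intro K hKU hK
  obtain ⟨A, B, hA, hB, h⟩ := h K hKU hK
  refine ⟨A, (Fintype.card ι + 1) * B, hA, by positivity, ?_⟩
  intro x hx α
  have hp : (0:ℝ) < ∏ i, ((α i).factorial : ℝ) :=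
      Finset.prod_pos fun i _ => by exact_mod_cast (α i).factorial_pos
  rw [one_div, inv_mul_le_iff₀ hp]
  have hMn := hpos (∑ i, α i)
  have hc : (Fintype.card ι : ℝ) ^ (∑ i, α i) ≤ (Fintype.card ι + 1 : ℝ) ^ (∑ i, α i) := by
    gcongr; linarith
  calc _ ≤ _ := mderiv_le hU hf α (hKU hx)
    _ ≤ _ := h x hx _
    _ ≤ A * B ^ (∑ i, α i) * M (∑ i, α i) * ((Fintype.card ι + 1 : ℝ) ^ (∑ i, α i) *
      ∏ i, ((α i).factorial : ℝ)) := by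
        gcongr
        exact (factorial_le_multi α).trans (by gcongr)
    _ = _ := by rw [mul_pow]; ring

end conv

lemma iteratedFDeriv_clm_zero {E F : Type*} [NormedAddCommGroup E] [NormedSpace ℝ E]
    [NormedAddCommGroup F] [NormedSpace ℝ F] (L : E →L[ℝ] F) (n : ℕ) (hn : 2 ≤ n) (x : E) :
    iteratedFDeriv ℝ n L x = 0 := by
  obtain ⟨m, rfl⟩ : ∃ m, n = m + 1 + 1 := ⟨n - 2, by omega⟩
  ext v
  rw [iteratedFDeriv_succ_apply_right]
  have : (fun y => fderiv ℝ L y) = fun _ => L := by funext y; exact L.fderiv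
  rw [this, iteratedFDeriv_succ_const]
  rfl

lemma norm_iteratedFDeriv_pi_le {E : Type*} [NormedAddCommGroup E] [NormedSpace ℝ E]
    {κ : Type*} [Fintype κ] (Φ : E → κ → ℝ) (z : E) (hΦ : ContDiffAt ℝ (⊤ : ℕ∞) Φ z) (n : ℕ)
    (C : ℝ) (hC : 0 ≤ C) (h : ∀ i, ‖iteratedFDeriv ℝ n (fun y => Φ y i) z‖ ≤ C) :
    ‖iteratedFDeriv ℝ n Φ z‖ ≤ C := by
  apply ContinuousMultilinearMap.opNorm_le_bound hC
  intro v
  have hp : 0 ≤ C * ∏ i, ‖v i‖ := mul_nonneg hC (Finset.prod_nonneg fun _ _ => norm_nonneg _)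
  rw [pi_norm_le_iff_of_nonneg hp]
  intro i
  have e := (ContinuousLinearMap.proj (R := ℝ) (φ := fun _ : κ => ℝ) i).iteratedFDeriv_comp_left
    (n := (⊤ : ℕ∞)) hΦ (i := n) (by exact_mod_cast le_top)
  have e2 : iteratedFDeriv ℝ n (fun y => Φ y i) z v = iteratedFDeriv ℝ n Φ z v i := by
    have := congrArg (fun T => T v) e
    exact this
  rw [← e2]
  exact (ContinuousMultilinearMap.le_opNorm _ _).trans (by gcongr; exact h i)

/-- Implicit Function Theorem in a Denjoy-Carleman class. -/
theorem stmt8 {N P : ℕ} (M : ℕ → ℝ)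
    (hpos : ∀ j, 0 < M j) (hmono : Monotone M) (hM0 : M 0 = 1)
    (hlog : ∀ j : ℕ, M (j+1) / M j ≤ M (j+2) / M (j+1))
    (hgrow : Filter.Tendsto (fun j : ℕ => M j ^ ((1 : ℝ) / j)) Filter.atTop Filter.atTop)
    (hder : ∃ C : ℝ, ∀ j : ℕ, 1 ≤ j → (M (j+1) / M j) ^ ((1 : ℝ) / j) ≤ C)
    (U : Set (EuclideanSpace ℝ (Fin N ⊕ Fin P))) (hUopen : IsOpen U)
    (f : Fin P → EuclideanSpace ℝ (Fin N ⊕ Fin P) → ℝ) (hf : ∀ i, CRM M U (f i))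
    (c : EuclideanSpace ℝ (Fin N ⊕ Fin P)) (hc : c ∈ U)
    (hzero : ∀ i, f i c = 0)
    (hjac : IsUnit (Matrix.of (fun i j => pd (Sum.inr j) (f i) c) : Matrix (Fin P) (Fin P) ℝ)) :
    ∃ V : Set (EuclideanSpace ℝ (Fin N)), ∃ W : Set (EuclideanSpace ℝ (Fin P)),
      IsOpen V ∧ IsOpen W ∧ fstE c ∈ V ∧ sndE c ∈ W ∧
      (∀ x ∈ V, ∀ y ∈ W, pairE x y ∈ U) ∧
      ∃ g : Fin P → EuclideanSpace ℝ (Fin N) → ℝ,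
        (∀ i, CRM M V (g i)) ∧
        (∀ i, g i (fstE c) = sndE c i) ∧
        (∀ x ∈ V, ((EuclideanSpace.equiv (Fin P) ℝ).symm (fun j => g j x)) ∈ W) ∧
        (∀ x ∈ V, ∀ i,
          f i (pairE x ((EuclideanSpace.equiv (Fin P) ℝ).symm (fun j => g j x))) = 0) := by
  classical
  -- the map `Φ(x, y) = (x, f(x, y))`
  let Φ : EuclideanSpace ℝ (Fin N ⊕ Fin P) → (Fin N ⊕ Fin P → ℝ) :=
    fun z => Sum.elim (fun i => z (Sum.inl i)) (fun j => f j z)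
  let cl : (i : Fin N ⊕ Fin P) → EuclideanSpace ℝ (Fin N ⊕ Fin P) →L[ℝ] ℝ :=
    fun i => EuclideanSpace.proj i
  have hΦs : ∀ i, ContDiffOn ℝ (⊤ : ℕ∞) (fun z => Φ z i) U := by
    rintro (i | j)
    · exact (cl (Sum.inl i)).contDiff.contDiffOn
    · exact (hf j).1
  have hΦ : ContDiffOn ℝ (⊤ : ℕ∞) Φ U := contDiffOn_pi.2 hΦs
  have hΦat : ∀ z ∈ U, ContDiffAt ℝ (⊤ : ℕ∞) Φ z := fun z hz => hΦ.contDiffAt (hUopen.mem_nhds hz)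
  have hΦd : ∀ z ∈ U, DifferentiableAt ℝ Φ z := fun z hz => (hΦat z hz).differentiableAt (by simp)
  have hcomp : ∀ z ∈ U, ∀ i w, fderiv ℝ Φ z w i = fderiv ℝ (fun z => Φ z i) z w := by
    intro z hz i w
    rw [fderiv_apply (hΦd z hz) i]
    rfl
  -- invertibility at `c`
  have hinj : Function.Injective (fderiv ℝ Φ c) := by
    rw [injective_iff_map_eq_zero]
    intro w hw
    have h1 : ∀ i, w (Sum.inl i) = 0 := by
      intro i
      have h := hcomp c hc (Sum.inl i) w
      rw [hw] at h
      have h2 : fderiv ℝ (fun z => Φ z (Sum.inl i)) c = cl (Sum.inl i) :=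
        (cl (Sum.inl i)).fderiv
      rw [h2] at h
      exact h.symm
    have hwsum : w = ∑ j : Fin P, w (Sum.inr j) • EuclideanSpace.single (Sum.inr j) (1 : ℝ) := by
      ext k
      rcases k with k | k
      · simp [h1, Finset.sum_apply, Pi.single_apply]
      · simp [Finset.sum_apply, Pi.single_apply]
    have h3 : (Matrix.of (fun i j => pd (Sum.inr j) (f i) c) : Matrix (Fin P) (Fin P) ℝ).mulVec
        (fun j => w (Sum.inr j)) = 0 := by
      funext i
      have h := hcomp c hc (Sum.inr i) w
      rw [hw] at h
      have h2 : fderiv ℝ (fun z => Φ z (Sum.inr i)) c w = fderiv ℝ (f i) c w := rfl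
      rw [h2, hwsum, map_sum] at h
      simp only [map_smul, smul_eq_mul] at h
      simp only [Matrix.mulVec, dotProduct, Matrix.of_apply, pd]
      refine Eq.trans ?_ h.symm
      apply Finset.sum_congr rfl
      intro j _
      rw [mul_comm]
    have h4 : (fun j => w (Sum.inr j)) = 0 := by
      apply Matrix.mulVec_injective_of_isUnit hjac
      rw [h3, Matrix.mulVec_zero]
    ext k
    rcases k with k | k
    · exact h1 k
    · exact congrFun h4 k
  have hsurj : Function.Surjective (fderiv ℝ Φ c) :=
    (LinearMap.injective_iff_surjective_of_finrank_eq_finrank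
      (f := (fderiv ℝ Φ c : EuclideanSpace ℝ (Fin N ⊕ Fin P) →ₗ[ℝ] (Fin N ⊕ Fin P → ℝ)))
      (by simp)).1 hinj
  let T : EuclideanSpace ℝ (Fin N ⊕ Fin P) ≃L[ℝ] (Fin N ⊕ Fin P → ℝ) :=
    (LinearEquiv.ofBijective
      (fderiv ℝ Φ c : EuclideanSpace ℝ (Fin N ⊕ Fin P) →ₗ[ℝ] (Fin N ⊕ Fin P → ℝ))
      ⟨hinj, hsurj⟩).toContinuousLinearEquiv
  have hT : (T : EuclideanSpace ℝ (Fin N ⊕ Fin P) →L[ℝ] (Fin N ⊕ Fin P → ℝ)) = fderiv ℝ Φ c := by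
    ext1 w; rfl
  have hTd : HasFDerivAt Φ (T : EuclideanSpace ℝ (Fin N ⊕ Fin P) →L[ℝ] (Fin N ⊕ Fin P → ℝ)) c := by
    rw [hT]; exact (hΦd c hc).hasFDerivAt
  let S : Set (EuclideanSpace ℝ (Fin N ⊕ Fin P)) := {z | z ∈ U ∧
    fderiv ℝ Φ z ∈ Set.range ((↑) : (EuclideanSpace ℝ (Fin N ⊕ Fin P) ≃L[ℝ] (Fin N ⊕ Fin P → ℝ)) →
      (EuclideanSpace ℝ (Fin N ⊕ Fin P) →L[ℝ] (Fin N ⊕ Fin P → ℝ)))}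
  have hfdc : ContinuousOn (fderiv ℝ Φ) U :=
    hΦ.continuousOn_fderiv_of_isOpen hUopen (by simp)
  have hS : S ∈ nhds c := by
    have h1 : ∀ᶠ z in nhds c, z ∈ U := hUopen.mem_nhds hc
    have h2 := (hfdc.continuousAt (hUopen.mem_nhds hc)).eventually_mem
      (by rw [← hT]; exact ContinuousLinearEquiv.nhds T)
    exact h1.and h2
  let e := ((hΦat c hc).toOpenPartialHomeomorph Φ hTd (by simp)).restr S
  have heΦ : ∀ z, e z = Φ z := fun z => rfl
  have hesrc : ∀ z ∈ e.source, z ∈ S := by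
    intro z hz
    exact interior_subset hz.2
  have hce : c ∈ e.source :=
    ⟨(hΦat c hc).mem_toOpenPartialHomeomorph_source hTd (by simp), mem_interior_iff_mem_nhds.2 hS⟩
  have hsymm : ∀ w ∈ e.target, ContDiffAt ℝ (⊤ : ℕ∞) e.symm w := by
    intro w hw
    obtain ⟨hzU, T', hT'⟩ := hesrc _ (e.map_target hw)
    refine e.contDiffAt_symm (f₀' := T') hw ?_ (hΦat _ hzU)
    rw [hT']
    exact (hΦd _ hzU).hasFDerivAt
  -- the section
  let J : EuclideanSpace ℝ (Fin N) →L[ℝ] (Fin N ⊕ Fin P → ℝ) :=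
    ContinuousLinearMap.pi (fun k => Sum.elim
      (fun i => (EuclideanSpace.proj i : EuclideanSpace ℝ (Fin N) →L[ℝ] ℝ)) (fun _ => 0) k)
  have hJl : ∀ x i, J x (Sum.inl i) = x i := fun x i => rfl
  have hJr : ∀ x j, J x (Sum.inr j) = 0 := fun x j => rfl
  let φ : EuclideanSpace ℝ (Fin N) → EuclideanSpace ℝ (Fin N ⊕ Fin P) := fun x => e.symm (J x)
  have hJc : Φ c = J (fstE c) := by
    funext k
    rcases k with k | k
    · rfl
    · exact hzero k
  have hφc : φ (fstE c) = c := by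
    change e.symm (J (fstE c)) = c
    rw [← hJc]
    exact e.left_inv hce
  let V1 : Set (EuclideanSpace ℝ (Fin N)) := J ⁻¹' e.target
  have hV1 : IsOpen V1 := e.open_target.preimage J.continuous
  have hφat : ∀ x ∈ V1, ContDiffAt ℝ (⊤ : ℕ∞) φ x := fun x hx =>
    (hsymm _ hx).comp x J.contDiff.contDiffAt
  have hφU : ∀ x ∈ V1, φ x ∈ U := fun x hx => (hesrc _ (e.map_target hx)).1
  have hΦφ : ∀ x ∈ V1, Φ (φ x) = J x := fun x hx => e.right_inv hx
  have hcV1 : fstE c ∈ V1 := by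
    change J (fstE c) ∈ e.target
    rw [← hJc]
    exact e.map_source hce
  have hpaircont : Continuous (fun q : EuclideanSpace ℝ (Fin N) × EuclideanSpace ℝ (Fin P) =>
      pairE q.1 q.2) := by
    unfold pairE
    apply (EuclideanSpace.equiv (Fin N ⊕ Fin P) ℝ).symm.continuous.comp
    apply continuous_pi
    rintro (i | j)
    · exact (EuclideanSpace.proj (𝕜 := ℝ) i).continuous.comp continuous_fst
    · exact (EuclideanSpace.proj (𝕜 := ℝ) j).continuous.comp continuous_snd
  have hpairc : pairE (fstE c) (sndE c) = c := by
    ext k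
    rcases k with k | k <;> rfl
  have hnhd : (fun q : EuclideanSpace ℝ (Fin N) × EuclideanSpace ℝ (Fin P) =>
      pairE q.1 q.2) ⁻¹' U ∈ nhds (fstE c, sndE c) := by
    apply hpaircont.continuousAt.preimage_mem_nhds
    simp only [hpairc]
    exact hUopen.mem_nhds hc
  obtain ⟨V0, W, hV0, hcV0, hW, hcW, hVW⟩ := mem_nhds_prod_iff'.1 hnhd
  have hsndcont : Continuous (sndE : EuclideanSpace ℝ (Fin N ⊕ Fin P) → EuclideanSpace ℝ (Fin P)) := by
    unfold sndE
    apply (EuclideanSpace.equiv (Fin P) ℝ).symm.continuous.comp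
    apply continuous_pi
    intro j
    exact (EuclideanSpace.proj (𝕜 := ℝ) (Sum.inr j)).continuous
  have hφcont : ContinuousOn (fun x => sndE (φ x)) V1 := fun x hx =>
    (hsndcont.continuousAt.comp (hφat x hx).continuousAt).continuousWithinAt
  let V : Set (EuclideanSpace ℝ (Fin N)) := V0 ∩ (V1 ∩ (fun x => sndE (φ x)) ⁻¹' W)
  have hVopen : IsOpen V := hV0.inter (hφcont.isOpen_inter_preimage hV1 hW)
  have hVV1 : ∀ x ∈ V, x ∈ V1 := fun x hx => hx.2.1
  refine ⟨V, W, hVopen, hW, ⟨hcV0, hcV1, ?_⟩, hcW, ?_, fun j x => φ x (Sum.inr j), ?_, ?_, ?_, ?_⟩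
  · change sndE (φ (fstE c)) ∈ W
    rw [hφc]; exact hcW
  · intro x hx y hy
    exact hVW (Set.mk_mem_prod hx.1 hy)
  · intro j
    have hφV : ContDiffOn ℝ (⊤ : ℕ∞) φ V := fun x hx => (hφat x (hVV1 x hx)).contDiffWithinAt
    refine CRM_of_bound hpos hVopen ((cl (Sum.inr j)).contDiff.comp_contDiffOn hφV) ?_
    intro K hKV hK
    have hKc : IsCompact (φ '' K) := hK.image_of_continuousOn (hφV.continuousOn.mono hKV)
    have hKU : φ '' K ⊆ U := by
      rintro _ ⟨x, hx, rfl⟩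
      exact hφU x (hVV1 x (hKV hx))
    choose A B hA hB hAB using fun i => (hf i).bound hpos hUopen hKU hKc
    obtain ⟨D, hD⟩ := hK.exists_bound_of_continuousOn
      ((hφV.continuousOn_fderiv_of_isOpen hVopen (by simp)).mono hKV)
    have hLc : ContinuousOn (fun x => fderiv ℝ e.symm (J x)) K := by
      have h1 : ContDiffOn ℝ (⊤ : ℕ∞) e.symm e.target := fun w hw => (hsymm w hw).contDiffWithinAt
      exact (h1.continuousOn_fderiv_of_isOpen e.open_target (by simp)).comp
        J.continuous.continuousOn (fun x hx => hVV1 x (hKV hx))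
    obtain ⟨Λ, hΛ⟩ := hK.exists_bound_of_continuousOn hLc
    obtain ⟨C0, hC0⟩ := hK.exists_bound_of_continuousOn (hφV.continuousOn.mono hKV)
    have hsA : ∀ i, A i ≤ ∑ i, A i + 1 := fun i =>
      (Finset.single_le_sum (fun i _ => (hA i).le) (Finset.mem_univ i)).trans (by linarith)
    have hsB : ∀ i, B i ≤ ∑ i, B i + 1 := fun i =>
      (Finset.single_le_sum (fun i _ => (hB i).le) (Finset.mem_univ i)).trans (by linarith)
    have hA0 : 0 < ∑ i, A i + 1 := by
      have := Finset.sum_nonneg (fun i (_ : i ∈ Finset.univ) => (hA i).le); linarith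
    have hB0 : 0 < ∑ i, B i + 1 := by
      have := Finset.sum_nonneg (fun i (_ : i ∈ Finset.univ) => (hB i).le); linarith
    obtain ⟨A', R, hA', hR, hcore⟩ := core_bound (E := EuclideanSpace ℝ (Fin N))
      (F := EuclideanSpace ℝ (Fin N ⊕ Fin P)) (G := Fin N ⊕ Fin P → ℝ) M hpos hmono hM0 hlog
      (∑ i, A i + 1) (∑ i, B i + 1) (|Λ| + 1) (|D| + 1) hA0 hB0 (by positivity) (by positivity)
    refine ⟨‖cl (Sum.inr j)‖ * (A' + |C0|) + 1, R, by positivity, hR, ?_⟩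
    intro x hx n
    have hxV1 := hVV1 x (hKV hx)
    have hMn := hpos n
    have hφn : ‖iteratedFDeriv ℝ n φ x‖ ≤ (A' + |C0|) * R ^ n * M n * n.factorial := by
      rcases Nat.eq_zero_or_pos n with rfl | hn
      · have := hC0 x hx
        simp only [norm_iteratedFDeriv_zero, pow_zero, hM0, Nat.factorial_zero, Nat.cast_one,
          mul_one]
        linarith [le_abs_self C0]
      · have h := hcore Φ φ x (fderiv ℝ e.symm (J x)) (hΦat _ (hφU x hxV1)) (hφat x hxV1)
          ?_ ?_ ?_ ?_ ?_ n hn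
        · refine h.trans ?_
          gcongr
          linarith [abs_nonneg C0]
        · intro m hm
          have hev : (Φ ∘ φ) =ᶠ[nhds x] J := by
            filter_upwards [hV1.mem_nhds hxV1] with y hy using hΦφ y hy
          rw [(Filter.EventuallyEq.iteratedFDeriv ℝ hev m).eq_of_nhds,
            iteratedFDeriv_clm_zero J m hm]
        · intro w
          have hev : (fun z => e.symm (Φ z)) =ᶠ[nhds (φ x)] fun z => z := by
            filter_upwards [e.open_source.mem_nhds (e.map_target hxV1)] with z hz
              using e.left_inv hz
          have hd1 : HasFDerivAt e.symm (fderiv ℝ e.symm (J x)) (Φ (φ x)) := by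
            rw [hΦφ x hxV1]
            exact ((hsymm _ hxV1).differentiableAt (by simp)).hasFDerivAt
          have hd2 := hd1.comp (φ x) (hΦd _ (hφU x hxV1)).hasFDerivAt
          have hd3 := (hasFDerivAt_id (𝕜 := ℝ) (φ x)).congr_of_eventuallyEq hev
          have := hd2.unique hd3
          exact congrArg (fun T => T w) this
        · exact (hΛ x hx).trans (by linarith [le_abs_self Λ])
        · exact (hD x hx).trans (by linarith [le_abs_self D])
        · intro k hk
          have hMk := hpos k
          apply norm_iteratedFDeriv_pi_le Φ _ (hΦat _ (hφU x hxV1)) k _ (by positivity)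
          rintro (i | i)
          · have h0 : iteratedFDeriv ℝ k (fun y => Φ y (Sum.inl i)) (φ x) = 0 :=
              iteratedFDeriv_clm_zero (cl (Sum.inl i)) k hk (φ x)
            rw [h0, norm_zero]
            positivity
          · refine (hAB i (φ x) ⟨x, hx, rfl⟩ k).trans ?_
            have h1 := hsA i
            have h2 := hsB i
            have h3 := (hB i).le
            gcongr
    have hcl := (cl (Sum.inr j)).norm_iteratedFDeriv_comp_left (N := (⊤ : ℕ∞)) (n := n) (hφat x hxV1)
      (by exact_mod_cast le_top)
    have hfin : ‖iteratedFDeriv ℝ n (fun x => φ x (Sum.inr j)) x‖ ≤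
        ‖cl (Sum.inr j)‖ * ‖iteratedFDeriv ℝ n φ x‖ := hcl
    calc _ ≤ _ := hfin
      _ ≤ ‖cl (Sum.inr j)‖ * ((A' + |C0|) * R ^ n * M n * n.factorial) := by gcongr
      _ = (‖cl (Sum.inr j)‖ * (A' + |C0|)) * R ^ n * M n * n.factorial := by ring
      _ ≤ _ := by gcongr; linarith
  · intro i
    simp only [hφc]
    rfl
  · intro x hx
    exact hx.2.2
  · intro x hx i
    have hx1 := hVV1 x hx
    have hpair : pairE x ((EuclideanSpace.equiv (Fin P) ℝ).symm (fun j => φ x (Sum.inr j)))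
        = φ x := by
      ext k
      rcases k with k | k
      · exact (congrFun (hΦφ x hx1) (Sum.inl k)).symm
      · rfl
    rw [hpair]
    exact congrFun (hΦφ x hx1) (Sum.inr i)
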